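/- Let Δ(τ) = e^{2πiτ}·∏_{n>0}(1−e^{2πinτ})^{24} be the discriminant cusp form of weight 12 for SL₂(ℤ). Then its completed L-values satisfy L*_Δ(1) = L*_Δ(11), L*_Δ(3) = (691/1620)·L*_Δ(11), L*_Δ(5) = (691/2520)·L*_Δ(11), L*_Δ(7) = (691/2520)·L*_Δ(11), and L*_Δ(9) = (691/1620)·L*_Δ(11), with L*_Δ(11) ≠ 0. -/

import Mathlib

open Complex UpperHalfPlane Finset

noncomputable section

/-- The zeta value `ζ(k) = ∑_{n ≥ 1} n^{-k}`. -/
def zetaVal (k : ℕ) : ℂ := ∑' n : ℕ, 1 / ((n : ℂ) + 1) ^ k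

/-- The double zeta value `ζ(r,s) = ∑_{0 < n < m} n^{-r} m^{-s}`. -/
def doubleZeta (r s : ℕ) : ℂ :=
  ∑' p : ℕ × ℕ, 1 / (((p.1 : ℂ) + 1) ^ r * ((p.1 : ℂ) + (p.2 : ℂ) + 2) ^ s)

/-- `ζ̃(k) = ζ(k)/(2πi)^k` for `k ≥ 2`, and `ζ̃(1) = 0`. -/
def zetaTilde (k : ℕ) : ℂ :=
  if 2 ≤ k then zetaVal k / (2 * (Real.pi : ℂ) * Complex.I) ^ k else 0

/-- `ζ̃(r,s) = ζ(r,s)/(2πi)^{r+s}` for `s ≥ 2`;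
`ζ̃(r,1) = -ζ̃(1,r) - ζ̃(r+1)` for `r ≥ 2`; `ζ̃(1,1) = -(1/2)ζ̃(2)`. -/
def doubleZetaTilde (r s : ℕ) : ℂ :=
  if 2 ≤ s then doubleZeta r s / (2 * (Real.pi : ℂ) * Complex.I) ^ (r + s)
  else if 2 ≤ r then
    -(doubleZeta 1 r / (2 * (Real.pi : ℂ) * Complex.I) ^ (1 + r)) - zetaTilde (r + 1)
  else -(1 / 2) * zetaTilde 2

/-- `g_h(q) = ((-1)^h/(h-1)!) ∑_{c,d>0} c^{h-1} q^{cd}`. -/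
def gSeries (h : ℕ) (q : ℂ) : ℂ :=
  ((-1 : ℂ) ^ h / (Nat.factorial (h - 1) : ℂ)) *
    ∑' p : ℕ × ℕ, ((p.1 : ℂ) + 1) ^ (h - 1) * q ^ ((p.1 + 1) * (p.2 + 1))

/-- `g_{r,s}(q) = ((-1)^{r+s}/((r-1)!(s-1)!)) ∑_{0<d₁<d₂, c₁,c₂>0} c₁^{r-1} c₂^{s-1}
q^{c₁d₁+c₂d₂}`, where we parametrize `c₁ = p.1+1`, `c₂ = p.2.1+1`, `d₁ = p.2.2.1+1`,
`d₂ = d₁ + p.2.2.2 + 1`. -/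
def gDoubleSeries (r s : ℕ) (q : ℂ) : ℂ :=
  ((-1 : ℂ) ^ (r + s) / ((Nat.factorial (r - 1) : ℂ) * (Nat.factorial (s - 1) : ℂ))) *
    ∑' p : ℕ × ℕ × ℕ × ℕ,
      ((p.1 : ℂ) + 1) ^ (r - 1) * ((p.2.1 : ℂ) + 1) ^ (s - 1) *
        q ^ ((p.1 + 1) * (p.2.2.1 + 1) + (p.2.1 + 1) * (p.2.2.1 + 1 + p.2.2.2 + 1))

/-- `g*_k(q) = ((-1)^k/k!) ∑_{c,d>0} d c^k q^{cd}`. -/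
def gStar (k : ℕ) (q : ℂ) : ℂ :=
  ((-1 : ℂ) ^ k / (Nat.factorial k : ℂ)) *
    ∑' p : ℕ × ℕ, ((p.2 : ℂ) + 1) * ((p.1 : ℂ) + 1) ^ k * q ^ ((p.1 + 1) * (p.2 + 1))

/-- `ε_{s,r}(q) = δ_{s,2} g*_r(q) - δ_{s,1} g*_{r-1}(q) + δ_{r,1}(g*_{s-1}(q) + g_r(q))
 + δ_{r,1} δ_{s,1} g_2(q)`. -/
def epsSeries (s r : ℕ) (q : ℂ) : ℂ :=
  (if s = 2 then gStar r q else 0) - (if s = 1 then gStar (r - 1) q else 0)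
    + (if r = 1 then gStar (s - 1) q + gSeries r q else 0)
    + (if r = 1 ∧ s = 1 then gSeries 2 q else 0)

/-- The divisor sum `σ_k(n) = ∑_{d ∣ n} d^k`. -/
def sigmaFn (k n : ℕ) : ℕ := ∑ d ∈ n.divisors, d ^ k

/-- The Eisenstein `q`-series `G_k(q) = ζ̃(k) + ((-1)^k/(k-1)!) ∑_{n>0} σ_{k-1}(n) q^n`. -/
def Gq (k : ℕ) (q : ℂ) : ℂ :=
  zetaTilde k + ((-1 : ℂ) ^ k / (Nat.factorial (k - 1) : ℂ)) *
    ∑' n : ℕ, (sigmaFn (k - 1) (n + 1) : ℂ) * q ^ (n + 1)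

/-- `C^p_{r,s} = δ_{r,p} + (-1)^r C(p-1,r-1) + (-1)^{p-s} C(p-1,s-1)`
(note `(-1)^{p-s} = (-1)^{p+s}`). -/
def Ccoef (r s p : ℕ) : ℤ :=
  (if r = p then 1 else 0) + (-1 : ℤ) ^ r * (Nat.choose (p - 1) (r - 1))
    + (-1 : ℤ) ^ (p + s) * (Nat.choose (p - 1) (s - 1))

/-- The double Eisenstein `q`-series
`G_{r,s}(q) = ζ̃(r,s) + ∑_{h+p=r+s} C^p_{r,s} g_h(q) ζ̃(p) + g_{r,s}(q) + (1/2)ε_{r,s}(q)`. -/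
def Gdouble (r s : ℕ) (q : ℂ) : ℂ :=
  doubleZetaTilde r s
    + ∑ p ∈ Finset.Icc 1 (r + s - 1), (Ccoef r s p : ℂ) * gSeries (r + s - p) q * zetaTilde p
    + gDoubleSeries r s q + (1 / 2) * epsSeries r s q

/-- `G^{1/2}_{r,s}(q) = G_{r,s}(q) + (1/2) G_{r+s}(q)`. -/
def Ghalf (r s : ℕ) (q : ℂ) : ℂ := Gdouble r s q + (1 / 2) * Gq (r + s) q

/-- `G'_k(q) = q (d/dq) G_k(q)`. -/
def Gderiv (k : ℕ) (q : ℂ) : ℂ := q * deriv (Gq k) q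

/-- `P_{r,s}(q) = G_r(q) G_s(q) + (δ_{r,2} + δ_{s,2}) G'_{r+s-2}(q) / (2(r+s-2))`. -/
def Pseries (r s : ℕ) (q : ℂ) : ℂ :=
  Gq r q * Gq s q +
    ((if r = 2 then (1 : ℂ) else 0) + (if s = 2 then (1 : ℂ) else 0)) *
      Gderiv (r + s - 2) q / (2 * ((r : ℂ) + (s : ℂ) - 2))

/-- The completed `L`-function `L*_f(s) = ∫₀^∞ f(it) t^{s-1} dt`. -/
def Lstar (f : UpperHalfPlane → ℂ) (s : ℝ) : ℂ :=
  ∫ t in Set.Ioi (0 : ℝ),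
    (if ht : 0 < t then f ⟨Complex.I * t, by simpa using ht⟩ else 0) * (t : ℂ) ^ ((s : ℂ) - 1)

/-- `q_{i,j}(f) = ∑_{r+s=k, r,s odd} (-1)^{(s-1)/2} L*_f(s) C(i-1,s-1)`. -/
def qcoef (k : ℕ) (f : UpperHalfPlane → ℂ) (i j : ℕ) : ℂ :=
  ∑ s ∈ Finset.Icc 1 (k - 1),
    if Odd s ∧ Odd (k - s) then
      (-1 : ℂ) ^ ((s - 1) / 2) * Lstar f (s : ℝ) * (Nat.choose (i - 1) (s - 1) : ℂ)
    else 0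

/-- `q = e^{2πiτ}`. -/
def qexp (τ : UpperHalfPlane) : ℂ := Complex.exp (2 * (Real.pi : ℂ) * Complex.I * (τ : ℂ))

/-- `f` is a normalized Hecke eigenform of weight `k`: its Fourier coefficients `a n`
satisfy `a 1 = 1`, multiplicativity on coprime arguments, and the Hecke recursion
at prime powers. -/
def IsNormalizedHeckeEigenform (k : ℕ) (f : UpperHalfPlane → ℂ) : Prop :=
  ∃ a : ℕ → ℂ,
    (∀ τ : UpperHalfPlane,
      f τ = ∑' n : ℕ, a (n + 1) * Complex.exp (2 * (Real.pi : ℂ) * Complex.I * ((n : ℂ) + 1) * (τ : ℂ))) ∧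
    a 1 = 1 ∧
    (∀ m n : ℕ, Nat.Coprime m n → a (m * n) = a m * a n) ∧
    (∀ p n : ℕ, p.Prime → 1 ≤ n →
      a (p ^ (n + 1)) = a p * a (p ^ n) - (p : ℂ) ^ (k - 1) * a (p ^ (n - 1)))

/-- The discriminant cusp form as a function on the upper half-plane:
`Δ(τ) = e^{2πiτ} ∏_{n>0} (1 - e^{2πinτ})^24`. -/
def DeltaH (τ : UpperHalfPlane) : ℂ :=
  Complex.exp (2 * (Real.pi : ℂ) * Complex.I * (τ : ℂ)) *
    ∏' n : ℕ, (1 - Complex.exp (2 * (Real.pi : ℂ) * Complex.I * ((n : ℂ) + 1) * (τ : ℂ))) ^ 24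

/-! For a cusp form `f` of even weight `k = w + 2` the values `L*_f(1), …, L*_f(k - 1)` are, up to
powers of `i` and binomial coefficients, the coefficients of the period polynomial
`P(u, v) = ∫_0^{i∞} f(τ) (uτ + v)^w dτ`. Modularity of `f` makes `SL₂(ℤ)` act on the Eichler
integrals `∫_z^{i∞} f(τ) (uτ + v)^w dτ`, with `P` measuring the defect under `z ↦ -1/z`; evaluating
at the elliptic points `i` and `ρ` gives the Eichler–Shimura relations, and evaluating the Eichler
integral of `T₂ f` gives `P(T₂ f)` in terms of `P(f)`. In weight `12` the functional equation and
the three-term relation leave two unknowns `L*_f(9)` and `L*_f(11)` in the even part of `P`. As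
cusp forms of weight `12` are multiples of `Δ`, we have `T₂ Δ = c Δ`; comparing `P(T₂ Δ) = c P(Δ)`
at two points gives `c = -24` and then `691 L*_Δ(11) = 1620 L*_Δ(9)`. All values are nonzero
because `Δ` is positive on the imaginary axis.
-/

open MeasureTheory Filter Topology Metric
open scoped MatrixGroups ModularForm
open ModularGroup Matrix.SpecialLinearGroup

/-- The holomorphic functions on the upper half-plane that decay exponentially as `im z → ∞`,
uniformly on vertical strips bounded away from the real axis; they can be integrated along the
vertical rays `[z, i∞)`. -/
structure VerticallyDecaying (g : ℂ → ℂ) : Prop where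
  differentiableOn : DifferentiableOn ℂ g upperHalfPlaneSet
  decay : ∀ R δ : ℝ, 0 < δ → ∃ c > 0, ∃ C ≥ 0, ∀ z : ℂ, |z.re| ≤ R → δ ≤ z.im →
    ‖g z‖ ≤ C * Real.exp (-c * z.im)

/-- The integral `∫_z^{i∞} g(w) dw` along the vertical ray, parametrized by `w = z + it`. -/
def rayIntegral (g : ℂ → ℂ) (z : ℂ) : ℂ :=
  ∫ t in Set.Ioi (0 : ℝ), g (z + Complex.I * t) * Complex.I

lemma add_I_mul_im (z : ℂ) (t : ℝ) : (z + Complex.I * t).im = z.im + t := by simp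

lemma add_I_mul_re (z : ℂ) (t : ℝ) : (z + Complex.I * t).re = z.re := by simp

namespace VerticallyDecaying

variable {g : ℂ → ℂ} {z : ℂ}

lemma mul_affine (hg : VerticallyDecaying g) (u v : ℂ) :
    VerticallyDecaying fun z => g z * (u * z + v) where
  differentiableOn := hg.differentiableOn.mul (by fun_prop)
  decay R δ hδ := by
    obtain ⟨c, hc, C, hC, hgC⟩ := hg.decay R δ hδ
    refine ⟨c / 2, half_pos hc, C * (‖u‖ * (R ⊔ 0 + 2 / c) + ‖v‖), by positivity,
      fun z hre him => ?_⟩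
    have him_le : z.im ≤ 2 / c * Real.exp (c / 2 * z.im) := by
      have h := Real.add_one_le_exp (c / 2 * z.im)
      rw [← inv_div, ← div_eq_inv_mul, le_div_iff₀ (by positivity)]
      linarith
    have hexp : 1 ≤ Real.exp (c / 2 * z.im) :=
      Real.one_le_exp (mul_nonneg (by positivity) (hδ.le.trans him))
    have hz : ‖z‖ ≤ (R ⊔ 0 + 2 / c) * Real.exp (c / 2 * z.im) := by
      calc ‖z‖ ≤ |z.re| + |z.im| := Complex.norm_le_abs_re_add_abs_im z
        _ ≤ (R ⊔ 0) * Real.exp (c / 2 * z.im) + 2 / c * Real.exp (c / 2 * z.im) := by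
          rw [abs_of_pos (hδ.trans_le him)]
          gcongr
          exact (hre.trans le_sup_left).trans (le_mul_of_one_le_right le_sup_right hexp)
        _ = _ := by ring
    calc ‖g z * (u * z + v)‖ ≤ ‖g z‖ * (‖u‖ * ‖z‖ + ‖v‖) := by
          rw [norm_mul, ← norm_mul u]
          gcongr
          exact norm_add_le _ _
      _ ≤ C * Real.exp (-c * z.im) * (‖u‖ * ((R ⊔ 0 + 2 / c) * Real.exp (c / 2 * z.im))
            + ‖v‖ * Real.exp (c / 2 * z.im)) := by
          gcongr
          exacts [hgC z hre him, le_mul_of_one_le_right (norm_nonneg v) hexp]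
      _ = C * (‖u‖ * (R ⊔ 0 + 2 / c) + ‖v‖) * Real.exp (-(c / 2) * z.im) := by
          rw [show -(c / 2) * z.im = -c * z.im + c / 2 * z.im by ring, Real.exp_add]
          ring

lemma mul_affine_pow (hg : VerticallyDecaying g) (u v : ℂ) (w : ℕ) :
    VerticallyDecaying fun z => g z * (u * z + v) ^ w := by
  induction w with
  | zero => simpa using hg
  | succ w ih => simpa only [pow_succ, ← mul_assoc] using ih.mul_affine u v

protected lemma deriv (hg : VerticallyDecaying g) : VerticallyDecaying (deriv g) where
  differentiableOn := hg.differentiableOn.deriv isOpen_upperHalfPlaneSet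
  decay R δ hδ := by
    obtain ⟨c, hc, C, hC, hgC⟩ := hg.decay (R + δ / 2) (δ / 2) (half_pos hδ)
    refine ⟨c, hc, C * Real.exp (c * (δ / 2)) / (δ / 2), by positivity, fun z hre him => ?_⟩
    have hball : ∀ y ∈ closedBall z (δ / 2), |y.re| ≤ R + δ / 2 ∧ z.im - δ / 2 ≤ y.im := by
      intro y hy
      rw [mem_closedBall_iff_norm] at hy
      have hyre := (abs_re_le_norm (y - z)).trans hy
      have hyim := (abs_im_le_norm (y - z)).trans hy
      rw [sub_re] at hyre
      rw [sub_im] at hyim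
      constructor <;> grind
    calc ‖deriv g z‖ ≤ C * Real.exp (-c * (z.im - δ / 2)) / (δ / 2) := by
          refine norm_deriv_le_of_forall_mem_sphere_norm_le (half_pos hδ)
            (DifferentiableOn.diffContOnCl fun y hy => ?_) fun y hy => ?_
          · have hy₀ : 0 < y.im := by
              linarith [(hball y (closure_ball_subset_closedBall hy)).2]
            exact (hg.differentiableOn.differentiableAt
              (isOpen_upperHalfPlaneSet.mem_nhds hy₀)).differentiableWithinAt
          · obtain ⟨hyre, hyim⟩ := hball y (sphere_subset_closedBall hy)
            refine (hgC y hyre (by linarith)).trans ?_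
            gcongr C * Real.exp ?_
            nlinarith
      _ = _ := by
          rw [show -c * (z.im - δ / 2) = c * (δ / 2) + -c * z.im by ring, Real.exp_add]
          ring

lemma hasDerivAt (hg : VerticallyDecaying g) (hz : 0 < z.im) :
    HasDerivAt g (deriv g z) z :=
  (hg.differentiableOn.differentiableAt (isOpen_upperHalfPlaneSet.mem_nhds hz)).hasDerivAt

lemma continuousOn_ray (hg : VerticallyDecaying g) (hz : 0 ≤ z.im) :
    ContinuousOn (fun t : ℝ => g (z + Complex.I * t)) (Set.Ioi 0) := by
  refine hg.differentiableOn.continuousOn.comp (by fun_prop) fun t ht => ?_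
  rw [Set.mem_ofPred_eq, add_I_mul_im]
  exact add_pos_of_nonneg_of_pos hz ht

lemma exists_ray_bound (hg : VerticallyDecaying g) (hz : 0 < z.im) :
    ∃ c > 0, ∃ C, ∀ x ∈ ball z (z.im / 2), ∀ t : ℝ, 0 ≤ t →
      ‖g (x + Complex.I * t)‖ ≤ C * Real.exp (-c * t) := by
  obtain ⟨c, hc, C, hC, hgC⟩ := hg.decay (|z.re| + z.im / 2) (z.im / 2) (half_pos hz)
  refine ⟨c, hc, C, fun x hx t ht => ?_⟩
  rw [mem_ball_iff_norm] at hx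
  have hre := (abs_re_le_norm (x - z)).trans hx.le
  have him := (abs_im_le_norm (x - z)).trans hx.le
  rw [sub_re] at hre
  rw [sub_im, abs_le] at him
  refine (hgC _ ?_ ?_).trans ?_
  · rw [add_I_mul_re]
    grind
  · rw [add_I_mul_im]
    linarith
  · rw [add_I_mul_im]
    gcongr C * Real.exp ?_
    nlinarith

lemma integrableOn_ray (hg : VerticallyDecaying g) (hz : 0 < z.im) :
    IntegrableOn (fun t : ℝ => g (z + Complex.I * t)) (Set.Ioi 0) := by
  obtain ⟨c, hc, C, hgC⟩ := hg.exists_ray_bound hz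
  refine ((integrableOn_exp_mul_Ioi (neg_neg_of_pos hc) 0).const_mul C).mono'
    ((hg.continuousOn_ray hz.le).aestronglyMeasurable measurableSet_Ioi) ?_
  exact ae_restrict_of_forall_mem measurableSet_Ioi fun t ht =>
    hgC z (mem_ball_self (half_pos hz)) t (le_of_lt ht)

lemma tendsto_ray (hg : VerticallyDecaying g) (hz : 0 < z.im) :
    Tendsto (fun t : ℝ => g (z + Complex.I * t)) atTop (𝓝 0) := by
  obtain ⟨c, hc, C, hgC⟩ := hg.exists_ray_bound hz
  have hexp : Tendsto (fun t : ℝ => C * Real.exp (-c * t)) atTop (𝓝 0) := by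
    simpa using (Real.tendsto_exp_atBot.comp
      (tendsto_id.const_mul_atTop_of_neg (neg_neg_of_pos hc))).const_mul C
  refine squeeze_zero_norm' ?_ hexp
  filter_upwards [eventually_ge_atTop 0] with t ht
  exact hgC z (mem_ball_self (half_pos hz)) t ht

lemma rayIntegral_deriv (hg : VerticallyDecaying g) (hz : 0 < z.im) :
    rayIntegral (deriv g) z = -g z := by
  have hderiv : ∀ t ∈ Set.Ici (0 : ℝ), HasDerivAt (fun t : ℝ => g (z + Complex.I * t))
      (deriv g (z + Complex.I * t) * Complex.I) t := by
    intro t ht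
    have hline : HasDerivAt (fun t : ℝ => z + Complex.I * (t : ℂ)) Complex.I t := by
      simpa using ((ofRealCLM.hasDerivAt (x := t)).const_mul Complex.I).const_add z
    refine (hg.hasDerivAt ?_).comp t hline
    rw [add_I_mul_im]
    exact add_pos_of_pos_of_nonneg hz ht
  rw [rayIntegral, integral_Ioi_of_hasDerivAt_of_tendsto' hderiv
    ((hg.deriv.integrableOn_ray hz).mul_const _) (hg.tendsto_ray hz)]
  simp

lemma hasDerivAt_rayIntegral (hg : VerticallyDecaying g) (hz : 0 < z.im) :
    HasDerivAt (rayIntegral g) (-g z) z := by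
  obtain ⟨c, hc, C, hgC⟩ := hg.deriv.exists_ray_bound hz
  have him : ∀ x ∈ ball z (z.im / 2), 0 < x.im := by
    intro x hx
    have h := (abs_im_le_norm (x - z)).trans (mem_ball_iff_norm.mp hx).le
    rw [sub_im, abs_le] at h
    linarith
  have hball := ball_mem_nhds z (half_pos hz)
  rw [← hg.rayIntegral_deriv hz]
  refine (hasDerivAt_integral_of_dominated_loc_of_deriv_le hball
    (F' := fun x (t : ℝ) => deriv g (x + Complex.I * t) * Complex.I)
    (bound := fun t => C * Real.exp (-c * t)) ?_ ((hg.integrableOn_ray hz).mul_const _)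
    ((hg.deriv.integrableOn_ray hz).mul_const _).aestronglyMeasurable ?_
    ((integrableOn_exp_mul_Ioi (neg_neg_of_pos hc) 0).const_mul C) ?_).2
  · filter_upwards [hball] with x hx
    exact ((hg.integrableOn_ray (him x hx)).mul_const _).aestronglyMeasurable
  · refine ae_restrict_of_forall_mem measurableSet_Ioi fun t ht x hx => ?_
    simpa using hgC x hx t (le_of_lt ht)
  · refine ae_restrict_of_forall_mem measurableSet_Ioi fun t ht x hx => ?_
    refine HasDerivAt.mul_const (HasDerivAt.comp_add_const x _ (hg.hasDerivAt ?_)) _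
    rw [add_I_mul_im]
    exact add_pos (him x hx) ht

end VerticallyDecaying

lemma rayIntegral_comp_affine (g : ℂ → ℂ) {a : ℝ} (ha : 0 < a) (b z : ℂ) :
    rayIntegral (fun w => a * g (a * w + b)) z = rayIntegral g (a * z + b) := by
  have h := integral_comp_mul_left_Ioi'
    (fun t : ℝ => g (a * z + b + Complex.I * t) * Complex.I) 0 ha
  rw [mul_zero] at h
  rw [rayIntegral, rayIntegral, ← h, ← integral_smul]
  congr 1 with t
  rw [real_smul, ofReal_mul]
  ring_nf

lemma rayIntegral_I_mul (g : ℂ → ℂ) (y : ℝ) :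
    rayIntegral g (Complex.I * y) = ∫ t in Set.Ioi y, g (Complex.I * t) * Complex.I := by
  have h := (measurePreserving_add_left volume y).setIntegral_preimage_emb
    (measurableEmbedding_addLeft y) (fun t : ℝ => g (Complex.I * t) * Complex.I) (Set.Ioi y)
  simpa [rayIntegral, mul_add] using h

lemma tendsto_rayIntegral_atTop (g : ℂ → ℂ) :
    Tendsto (fun y : ℝ => rayIntegral g (Complex.I * y)) atTop (𝓝 0) := by
  simp only [rayIntegral_I_mul]
  exact tendsto_integral_Ioi_zero tendsto_id

lemma tendsto_rayIntegral_zero {g : ℂ → ℂ}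
    (hg : IntegrableOn (fun t : ℝ => g (Complex.I * t)) (Set.Ioi 0)) :
    Tendsto (fun y : ℝ => rayIntegral g (Complex.I * y)) (𝓝[>] 0) (𝓝 (rayIntegral g 0)) := by
  have hcover : AECover (volume.restrict (Set.Ioi (0 : ℝ))) (𝓝[>] (0 : ℝ)) fun y => Set.Ioi y :=
    aecover_Ioi_of_Ioi (tendsto_id.mono_left nhdsWithin_le_nhds)
  have hlim := hcover.integral_tendsto_of_countably_generated (hg.mul_const Complex.I)
  have hzero : rayIntegral g 0 = ∫ t in Set.Ioi (0 : ℝ), g (Complex.I * t) * Complex.I := by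
    simpa using rayIntegral_I_mul g 0
  rw [hzero]
  refine hlim.congr' ?_
  filter_upwards [self_mem_nhdsWithin] with y (hy : 0 < y)
  rw [rayIntegral_I_mul, Measure.restrict_restrict measurableSet_Ioi,
    Set.inter_eq_left.mpr (Set.Ioi_subset_Ioi hy.le)]

lemma neg_one_div_im_pos {z : ℂ} (hz : 0 < z.im) : 0 < (-1 / z).im := by
  rw [neg_div, one_div, neg_im, inv_im, neg_div, neg_neg]
  exact div_pos hz (normSq_pos.mpr (by rintro rfl; simp at hz))

/-- The difference has derivative zero, and letting `z → 0` along the imaginary axis identifies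
the constant. -/
lemma rayIntegral_neg_one_div {g h : ℂ → ℂ} (hg : VerticallyDecaying g)
    (hh : VerticallyDecaying h) (hint : IntegrableOn (fun t : ℝ => h (Complex.I * t)) (Set.Ioi 0))
    (hgh : ∀ z : ℂ, 0 < z.im → g (-1 / z) = z ^ 2 * h z) {z : ℂ} (hz : 0 < z.im) :
    rayIntegral g (-1 / z) = rayIntegral h z - rayIntegral h 0 := by
  set D : ℂ → ℂ := fun z => rayIntegral h z - rayIntegral g (-1 / z) with hD
  have hderiv : ∀ z ∈ upperHalfPlaneSet, HasDerivAt D 0 z := by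
    intro z hz
    have hz0 : z ≠ 0 := by rintro rfl; simp at hz
    have hinv : HasDerivAt (fun z : ℂ => -1 / z) (1 / z ^ 2) z := by
      simpa [div_eq_mul_inv] using (hasDerivAt_inv hz0).const_mul (-1)
    have hder := (hh.hasDerivAt_rayIntegral hz).sub
      ((hg.hasDerivAt_rayIntegral (neg_one_div_im_pos hz)).comp z hinv)
    rwa [hgh z hz, show -h z - -(z ^ 2 * h z) * (1 / z ^ 2) = 0 by field_simp; ring] at hder
  have hconst : ∀ y : ℝ, 0 < y → D (Complex.I * y) = D z := fun y hy =>
    isOpen_upperHalfPlaneSet.is_const_of_deriv_eq_zero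
      (convex_halfSpace_im_gt 0).isPreconnected
      (fun z hz => (hderiv z hz).differentiableAt.differentiableWithinAt)
      (fun z hz => (hderiv z hz).deriv) (by simpa using hy) hz
  have hg0 : Tendsto (fun y : ℝ => rayIntegral g (-1 / (Complex.I * y))) (𝓝[>] 0) (𝓝 0) := by
    refine ((tendsto_rayIntegral_atTop g).comp tendsto_inv_nhdsGT_zero).congr fun y => ?_
    rw [Function.comp_apply, ofReal_inv, neg_div, one_div, mul_inv, inv_I, neg_mul, neg_neg]
  have hlim := (tendsto_rayIntegral_zero hint).sub hg0
  have hD0 : D z = rayIntegral h 0 - 0 := by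
    refine tendsto_nhds_unique (tendsto_const_nhds.congr' ?_) hlim
    filter_upwards [self_mem_nhdsWithin] with y hy
    exact (hconst y hy).symm
  rw [← sub_zero (rayIntegral h 0), ← hD0, hD]
  ring

section LevelOne
variable {k : ℤ} (f : CuspForm 𝒮ℒ k)

lemma levelOne_comp_ofComplex_add_one (z : ℂ) : f (ofComplex (z + 1)) = f (ofComplex z) := by
  simpa using SlashInvariantFormClass.periodic_comp_ofComplex f (h := 1) (by simp) z

lemma levelOne_comp_ofComplex_neg_one_div {z : ℂ} (hz : 0 < z.im) :
    f (ofComplex (-1 / z)) = z ^ k * f (ofComplex z) := by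
  have hS : ofComplex (-1 / z) = S • (⟨z, hz⟩ : ℍ) := by
    rw [modular_S_smul, ofComplex_apply_of_im_pos (neg_one_div_im_pos hz)]
    ext
    rw [coe_mk, coe_mk, neg_div, one_div, inv_neg]
  have hslash := (ModularForm.slash_action_eq'_iff k f S ⟨z, hz⟩).mp
    (congr_fun (SlashInvariantForm.slash_action_eqn f (mapGL ℝ S) ⟨S, rfl⟩) _)
  rw [hS, hslash, ofComplex_apply_of_im_pos hz]
  simp [S]

lemma verticallyDecaying_comp_ofComplex : VerticallyDecaying fun z => f (ofComplex z) where
  differentiableOn := UpperHalfPlane.mdifferentiable_iff.mp (CuspFormClass.holo f)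
  decay R δ hδ := by
    obtain ⟨c, hc, hO⟩ := CuspFormClass.exp_decay_atImInfty' f
    obtain ⟨C, hC⟩ := hO.bound
    obtain ⟨A, hA⟩ := (atImInfty_mem _).mp hC
    set K := Set.Icc (-R) R ×ℂ Set.Icc δ A
    have hcont : ContinuousOn (fun z => f (ofComplex z) * Real.exp (c * z.im)) K :=
      ((UpperHalfPlane.mdifferentiable_iff.mp (CuspFormClass.holo f)).continuousOn.mono
        fun z hz => hδ.trans_le hz.2.1).mul (by fun_prop)
    obtain ⟨B, hB⟩ :=
      (isCompact_Icc.reProdIm isCompact_Icc).exists_bound_of_continuousOn hcont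
    refine ⟨c, hc, max C B ⊔ 0, le_sup_right, fun z hre him => ?_⟩
    have hz := hδ.trans_le him
    rcases le_total A z.im with hA' | hA'
    · have hle := hA ⟨z, hz⟩ hA'
      rw [Set.mem_ofPred_eq, Real.norm_eq_abs, Real.abs_exp] at hle
      rw [ofComplex_apply_of_im_pos hz]
      exact hle.trans (mul_le_mul_of_nonneg_right ((le_max_left C B).trans le_sup_left)
        (Real.exp_pos _).le)
    · have hle := hB z ⟨abs_le.mp hre, him, hA'⟩
      rw [norm_mul, norm_real, Real.norm_eq_abs, Real.abs_exp] at hle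
      rw [neg_mul, Real.exp_neg, ← div_eq_mul_inv, le_div_iff₀ (Real.exp_pos _)]
      exact hle.trans ((le_max_right C B).trans le_sup_left)

lemma Lstar_eq_mellin (g : ℍ → ℂ) (s : ℝ) :
    Lstar g s = mellin (fun t => g (ofComplex (Complex.I * t))) s := by
  rw [Lstar, mellin]
  refine setIntegral_congr_fun measurableSet_Ioi fun t (ht : 0 < t) => ?_
  rw [dif_pos ht, ofComplex_apply_of_im_pos (by simpa using ht), smul_eq_mul, mul_comm]

lemma mellinConvergent_levelOne (hk : 0 < k) (s : ℂ) :
    MellinConvergent (fun t : ℝ => f (ofComplex (Complex.I * t))) s :=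
  ((CuspForm.isStrongFEPair hk f).hasMellin s).1

lemma integrableOn_imaginaryAxis_mul_pow (hk : 0 < k) (n : ℕ) :
    IntegrableOn (fun t : ℝ => f (ofComplex (Complex.I * t)) * (t : ℂ) ^ n) (Set.Ioi 0) := by
  refine (mellinConvergent_levelOne f hk (n + 1)).congr_fun (fun t _ => ?_) measurableSet_Ioi
  simp [mul_comm]

lemma integrableOn_imaginaryAxis_mul_affine_pow (hk : 0 < k) (u v : ℂ) (n : ℕ) :
    IntegrableOn (fun t : ℝ => f (ofComplex (Complex.I * t)) * (u * (Complex.I * t) + v) ^ n)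
      (Set.Ioi 0) := by
  simp only [add_pow, Finset.mul_sum]
  refine integrable_finsetSum _ fun m _ =>
    ((integrableOn_imaginaryAxis_mul_pow f hk m).mul_const
      ((u * Complex.I) ^ m * v ^ (n - m) * n.choose m)).congr (ae_of_all _ fun t => ?_)
  simp only [mul_pow]
  ring

lemma Lstar_weight_sub (hk : 0 < k) (s : ℝ) :
    Lstar f (k - s) = Complex.I ^ k * Lstar f s := by
  have hP := CuspForm.isStrongFEPair hk f
  have hsymm : (ModularForm.weakFEPair hk f).symm.f = fun t : ℝ => f (ofComplex (Complex.I * t)) :=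
    funext fun t => congr_fun (SlashInvariantForm.slash_action_eqn f (mapGL ℝ S) ⟨S, rfl⟩) _
  have hfe := (ModularForm.weakFEPair hk f).functional_equation s
  rw [hP.Λ_eq, hP.symm.Λ_eq, hsymm] at hfe
  rw [Lstar_eq_mellin, Lstar_eq_mellin, ofReal_sub, ofReal_intCast]
  exact hfe

lemma Lstar_add_one (g : ℍ → ℂ) (n : ℕ) :
    Lstar g (n + 1) = ∫ t in Set.Ioi (0 : ℝ), g (ofComplex (Complex.I * t)) * (t : ℂ) ^ n := by
  rw [Lstar_eq_mellin, mellin]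
  refine setIntegral_congr_fun measurableSet_Ioi fun t _ => ?_
  simp [mul_comm]

end LevelOne

/-- The Eichler integral `∫_z^{i∞} f(τ) (uτ + v)^w dτ`, as a function of `z`. For a cusp form `f` of
weight `w + 2` the modular group acts on it through the row vectors `(u, v)`. -/
def eichlerIntegral (f : ℍ → ℂ) (w : ℕ) (u v : ℂ) : ℂ → ℂ :=
  rayIntegral fun τ => f (ofComplex τ) * (u * τ + v) ^ w

/-- The period polynomial `∫_0^{i∞} f(τ) (uτ + v)^w dτ`, homogeneous of degree `w` in `(u, v)`. -/
def periodPoly (f : ℍ → ℂ) (w : ℕ) (u v : ℂ) : ℂ := eichlerIntegral f w u v 0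

/-- Twice the part of the period polynomial that is even in `v`. -/
def evenPeriodPoly (f : ℍ → ℂ) (w : ℕ) (u v : ℂ) : ℂ :=
  periodPoly f w u v + periodPoly f w u (-v)

lemma eichlerIntegral_neg (f : ℍ → ℂ) {w : ℕ} (hw : Even w) (u v : ℂ) :
    eichlerIntegral f w (-u) (-v) = eichlerIntegral f w u v := by
  simp only [eichlerIntegral, neg_mul, ← neg_add, hw.neg_pow]

lemma periodPoly_neg (f : ℍ → ℂ) {w : ℕ} (hw : Even w) (u v : ℂ) :
    periodPoly f w (-u) (-v) = periodPoly f w u v :=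
  congr_fun (eichlerIntegral_neg f hw u v) 0

section PeriodRelations
variable {k : ℤ} (f : CuspForm 𝒮ℒ k) {w : ℕ}

lemma eichlerIntegral_add_one (u v z : ℂ) :
    eichlerIntegral f w u v (z + 1) = eichlerIntegral f w u (u + v) z := by
  have h := rayIntegral_comp_affine (fun τ => f (ofComplex τ) * (u * τ + v) ^ w) one_pos 1 z
  simp only [ofReal_one, one_mul, levelOne_comp_ofComplex_add_one] at h
  simp only [eichlerIntegral, ← h, mul_add, mul_one, add_assoc]

lemma eichlerIntegral_neg_one_div (hk : k = w + 2) (u v : ℂ) {z : ℂ} (hz : 0 < z.im) :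
    eichlerIntegral f w u v (-1 / z) = eichlerIntegral f w v (-u) z - periodPoly f w v (-u) := by
  have hf := verticallyDecaying_comp_ofComplex f
  refine rayIntegral_neg_one_div (hf.mul_affine_pow u v w) (hf.mul_affine_pow v (-u) w)
    (integrableOn_imaginaryAxis_mul_affine_pow f (by omega) v (-u) w) (fun τ hτ => ?_) hz
  have hτ0 : τ ≠ 0 := by rintro rfl; simp at hτ
  have hτk : τ ^ k = τ ^ w * τ ^ 2 := by
    rw [hk, zpow_add₀ hτ0, zpow_natCast, zpow_ofNat]
  rw [levelOne_comp_ofComplex_neg_one_div f hτ, hτk,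
    show u * (-1 / τ) + v = (v * τ + -u) / τ by field_simp; ring, div_pow]
  field_simp

lemma periodPoly_eq_sum (hk : k = w + 2) (u v : ℂ) :
    periodPoly f w u v = ∑ m ∈ Finset.range (w + 1),
      Complex.I ^ (m + 1) * w.choose m * u ^ m * v ^ (w - m) * Lstar f (m + 1) := by
  have hint (m : ℕ) := integrableOn_imaginaryAxis_mul_pow f (by omega) m
  simp only [Lstar_add_one, ← integral_const_mul, periodPoly, eichlerIntegral, rayIntegral]
  rw [← integral_finsetSum _ fun m _ => (hint m).const_mul _]
  congr 1 with t
  simp only [zero_add, add_pow, mul_pow, Finset.mul_sum, Finset.sum_mul]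
  refine Finset.sum_congr rfl fun m _ => ?_
  ring

lemma periodPoly_antisymm (hk : k = w + 2) (hw : Even w) (u v : ℂ) :
    periodPoly f w u v = -periodPoly f w v (-u) := by
  have hI : -1 / Complex.I = Complex.I := by simp
  have h₁ := eichlerIntegral_neg_one_div f hk u v (z := Complex.I) (by simp)
  have h₂ := eichlerIntegral_neg_one_div f hk v (-u) (z := Complex.I) (by simp)
  rw [hI] at h₁ h₂
  rw [eichlerIntegral_neg f hw, periodPoly_neg f hw] at h₂
  linear_combination h₁ + h₂

/-- The order-three fixed point `ρ` of `z ↦ -1 / (z + 1)` gives the relation. -/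
lemma periodPoly_lewis (hk : k = w + 2) (hw : Even w) (u v : ℂ) :
    periodPoly f w u v = periodPoly f w (u + v) v + periodPoly f w u (u + v) := by
  have hρ : -1 / (ρ : ℂ) = ρ + 1 := by
    rw [div_eq_iff ρ.ne_zero]
    linear_combination -ρ_sq
  have hST : ∀ a b : ℂ, eichlerIntegral f w a (a + b) ρ =
      eichlerIntegral f w b (-a) ρ - periodPoly f w b (-a) := fun a b => by
    rw [← eichlerIntegral_add_one, ← hρ, eichlerIntegral_neg_one_div f hk a b ρ.im_pos]
  have h₁ := hST u v
  have h₂ := hST v (-(u + v))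
  have h₃ := hST (u + v) (-u)
  rw [eichlerIntegral_neg f hw, periodPoly_neg f hw] at h₂ h₃
  rw [show v + -(u + v) = -u by ring] at h₂
  rw [show u + v + -u = v by ring] at h₃
  linear_combination periodPoly_antisymm f hk hw u v - h₁ - h₂ - h₃

lemma evenPeriodPoly_lewis (hk : k = w + 2) (hw : Even w) (u v : ℂ) :
    evenPeriodPoly f w u v = evenPeriodPoly f w (u + v) v + evenPeriodPoly f w u (u + v) := by
  have h := periodPoly_lewis f hk hw (u + v) (-v)
  rw [add_neg_cancel_right] at h
  simp only [evenPeriodPoly]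
  linear_combination periodPoly_lewis f hk hw u v - h - periodPoly_antisymm f hk hw (u + v) u

end PeriodRelations

lemma VerticallyDecaying.comp_affine {g : ℂ → ℂ} (hg : VerticallyDecaying g) {a : ℝ} (ha : 0 < a)
    (b : ℝ) : VerticallyDecaying fun z => g (a * z + b) where
  differentiableOn := hg.differentiableOn.comp (by fun_prop) fun z (hz : 0 < z.im) =>
    show 0 < (a * z + b : ℂ).im by simpa using mul_pos ha hz
  decay R δ hδ := by
    obtain ⟨c, hc, C, hC, hgC⟩ := hg.decay (a * R + |b|) (a * δ) (mul_pos ha hδ)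
    refine ⟨c * a, mul_pos hc ha, C, hC, fun z hre him => ?_⟩
    have hre' : |(a * z + b : ℂ).re| ≤ a * R + |b| := by
      rw [add_re, re_ofReal_mul, ofReal_re]
      refine (abs_add_le _ _).trans ?_
      rw [abs_mul, abs_of_pos ha]
      gcongr
    have him' : (a * z + b : ℂ).im = a * z.im := by simp
    have h := hgC _ hre' (by rw [him']; gcongr)
    rwa [him', ← mul_assoc, neg_mul] at h

lemma tendsto_ofComplex_affine_atImInfty {a : ℝ} (ha : 0 < a) (b : ℝ) :
    Tendsto (fun τ : ℍ => ofComplex (a * τ + b)) atImInfty atImInfty := by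
  have him (τ : ℍ) : (ofComplex (a * τ + b)).im = a * τ.im := by
    rw [ofComplex_apply_of_im_pos (by simpa using mul_pos ha τ.im_pos), mk_im, add_im,
      im_ofReal_mul, ofReal_im, add_zero, coe_im]
  refine tendsto_comap_iff.mpr ?_
  simp only [Function.comp_def, him]
  exact tendsto_comap.const_mul_atTop ha

/-- The Hecke operator `T₂` in weight `k`, on functions on the upper half-plane extended to `ℂ`. -/
def heckeTwoFun (k : ℤ) (g : ℂ → ℂ) (z : ℂ) : ℂ :=
  2 ^ (k - 1) * g (2 * z) + (g (z / 2) + g ((z + 1) / 2)) / 2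

lemma div_two_mul_add_one_eq {z : ℂ} (hz : 0 < z.im) :
    z / (2 * z + 1) = -1 / (-1 / z - 1 - 1) := by
  have hz0 : z ≠ 0 := by rintro rfl; simp at hz
  rw [show -1 / z - 1 - 1 = -((2 * z + 1) / z) by field_simp; ring, neg_div_neg_eq, one_div_div]

section HeckeTwo
variable {k : ℤ} (f : CuspForm 𝒮ℒ k)

lemma levelOne_comp_ofComplex_div_two_mul_add_one {z : ℂ} (hz : 0 < z.im) :
    f (ofComplex (z / (2 * z + 1))) = (2 * z + 1) ^ k * f (ofComplex z) := by
  have hz0 : z ≠ 0 := by rintro rfl; simp at hz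
  have hneg : (-1) ^ k * f (ofComplex z) = f (ofComplex z) := by
    have h := levelOne_comp_ofComplex_neg_one_div f (neg_one_div_im_pos hz)
    rw [levelOne_comp_ofComplex_neg_one_div f hz, ← mul_assoc, ← mul_zpow,
      div_mul_cancel₀ _ hz0, show -1 / (-1 / z) = z by field_simp] at h
    exact h.symm
  have him : 0 < (-1 / z - 1 - 1).im := by simpa using neg_one_div_im_pos hz
  rw [div_two_mul_add_one_eq hz, levelOne_comp_ofComplex_neg_one_div f him,
    ← levelOne_comp_ofComplex_add_one, sub_add_cancel, ← levelOne_comp_ofComplex_add_one,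
    sub_add_cancel, levelOne_comp_ofComplex_neg_one_div f hz, ← mul_assoc, ← mul_zpow]
  conv_rhs => rw [← hneg, ← mul_assoc, ← mul_zpow]
  congr 2
  field_simp
  ring

lemma heckeTwoFun_add_one (z : ℂ) :
    heckeTwoFun k (fun z => f (ofComplex z)) (z + 1) =
      heckeTwoFun k (fun z => f (ofComplex z)) z := by
  rw [heckeTwoFun, heckeTwoFun, show 2 * (z + 1) = 2 * z + 1 + 1 by ring,
    show (z + 1 + 1) / 2 = z / 2 + 1 by ring]
  simp only [levelOne_comp_ofComplex_add_one]
  ring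

lemma heckeTwoFun_neg_one_div {z : ℂ} (hz : 0 < z.im) :
    heckeTwoFun k (fun z => f (ofComplex z)) (-1 / z) =
      z ^ k * heckeTwoFun k (fun z => f (ofComplex z)) z := by
  have hz0 : z ≠ 0 := by rintro rfl; simp at hz
  have h₁ : f (ofComplex (2 * (-1 / z))) = (z / 2) ^ k * f (ofComplex (z / 2)) := by
    rw [← levelOne_comp_ofComplex_neg_one_div f (by simpa using hz)]
    congr 2
    field_simp
  have h₂ : f (ofComplex (-1 / z / 2)) = (2 * z) ^ k * f (ofComplex (2 * z)) := by
    rw [← levelOne_comp_ofComplex_neg_one_div f (by simpa using hz)]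
    congr 2
    field_simp
  have h₃ : f (ofComplex ((-1 / z + 1) / 2)) = z ^ k * f (ofComplex ((z + 1) / 2)) := by
    have h := levelOne_comp_ofComplex_div_two_mul_add_one f (z := (z - 1) / 2) (by simpa using hz)
    rw [← levelOne_comp_ofComplex_add_one f ((z - 1) / 2), show 2 * ((z - 1) / 2) + 1 = z by ring,
      show (z - 1) / 2 + 1 = (z + 1) / 2 by ring] at h
    rw [← h]
    congr 2
    field_simp
    ring
  simp only [heckeTwoFun, h₁, h₂, h₃, div_zpow, mul_zpow, zpow_sub_one₀ (two_ne_zero' ℂ)]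
  field_simp
  ring

lemma heckeTwoFun_slash (A : SL(2, ℤ)) :
    (fun τ : ℍ => heckeTwoFun k (fun z => f (ofComplex z)) τ) ∣[k] A =
      fun τ : ℍ => heckeTwoFun k (fun z => f (ofComplex z)) τ := by
  refine SlashInvariantForm.slash_action_generators_SL2Z ?_ ?_ A
  · ext τ
    rw [ModularForm.slash_action_eq'_iff, modular_S_smul]
    have h := heckeTwoFun_neg_one_div f τ.im_pos
    rw [neg_div, one_div, ← inv_neg] at h
    simpa [S] using h
  · ext τ
    rw [ModularForm.slash_action_eq'_iff, modular_T_smul]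
    simpa [T, add_comm] using heckeTwoFun_add_one f τ

lemma heckeTwoFun_eq_comp_affine (g : ℂ → ℂ) (z : ℂ) :
    heckeTwoFun k g z = 2 ^ (k - 1) * g ((2 : ℝ) * z + (0 : ℝ)) +
      (g ((2⁻¹ : ℝ) * z + (0 : ℝ)) + g ((2⁻¹ : ℝ) * z + (2⁻¹ : ℝ))) / 2 := by
  simp [heckeTwoFun, div_eq_inv_mul, mul_add]

lemma differentiableOn_heckeTwoFun :
    DifferentiableOn ℂ (heckeTwoFun k fun z => f (ofComplex z)) upperHalfPlaneSet := by
  have hf {a : ℝ} (ha : 0 < a) (b : ℝ) :=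
    ((verticallyDecaying_comp_ofComplex f).comp_affine ha b).differentiableOn
  simp only [funext (heckeTwoFun_eq_comp_affine (k := k) fun z => f (ofComplex z))]
  exact ((hf two_pos 0).const_mul _).add
    (((hf (inv_pos.mpr two_pos) 0).add (hf (inv_pos.mpr two_pos) 2⁻¹)).div_const 2)

lemma isZeroAtImInfty_heckeTwoFun :
    IsZeroAtImInfty fun τ : ℍ => heckeTwoFun k (fun z => f (ofComplex z)) τ := by
  have hf {a : ℝ} (ha : 0 < a) (b : ℝ) :=
    (CuspFormClass.zero_at_infty f).comp (tendsto_ofComplex_affine_atImInfty ha b)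
  have h := ((hf two_pos 0).const_mul (2 ^ (k - 1))).add
    (((hf (inv_pos.mpr two_pos) 0).add (hf (inv_pos.mpr two_pos) 2⁻¹)).div_const 2)
  simp only [mul_zero, add_zero, zero_div] at h
  exact h.congr fun τ => (heckeTwoFun_eq_comp_affine _ _).symm

/-- The Hecke operator `T₂` on cusp forms of level one. -/
def heckeTwo : CuspForm 𝒮ℒ k where
  toFun τ := heckeTwoFun k (fun z => f (ofComplex z)) τ
  slash_action_eq' := by
    rintro _ ⟨A, rfl⟩
    exact heckeTwoFun_slash f A
  holo' := UpperHalfPlane.mdifferentiable_iff.mpr <|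
    (differentiableOn_heckeTwoFun f).congr fun z hz => by
      simp [ofComplex_apply_of_im_pos hz]
  zero_at_cusps' hc := by
    rw [Subgroup.IsArithmetic.isCusp_iff_isCusp_SL2Z] at hc
    rw [OnePoint.isZeroAt_iff_forall_SL2Z hc]
    intro A _
    rw [heckeTwoFun_slash]
    exact isZeroAtImInfty_heckeTwoFun f

lemma heckeTwo_apply (τ : ℍ) :
    heckeTwo f τ = heckeTwoFun k (fun z => f (ofComplex z)) τ := rfl

end HeckeTwo

lemma rayIntegral_add {g h : ℂ → ℂ} {z : ℂ}
    (hg : IntegrableOn (fun t : ℝ => g (z + Complex.I * t)) (Set.Ioi 0))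
    (hh : IntegrableOn (fun t : ℝ => h (z + Complex.I * t)) (Set.Ioi 0)) :
    rayIntegral (fun τ => g τ + h τ) z = rayIntegral g z + rayIntegral h z := by
  simp only [rayIntegral, add_mul]
  exact integral_add (hg.mul_const _) (hh.mul_const _)

lemma rayIntegral_congr {g h : ℂ → ℂ} {z : ℂ} (hz : 0 < z.im)
    (hgh : ∀ τ : ℂ, 0 < τ.im → g τ = h τ) : rayIntegral g z = rayIntegral h z := by
  refine setIntegral_congr_fun measurableSet_Ioi fun t (ht : 0 < t) => ?_
  rw [hgh _ (by rw [add_I_mul_im]; exact add_pos hz ht)]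

section HeckePeriods
variable {k : ℤ} (f : CuspForm 𝒮ℒ k) {w : ℕ}

lemma eichlerIntegral_heckeTwo (hk : k = w + 2) (u v : ℂ) {z : ℂ} (hz : 0 < z.im) :
    eichlerIntegral (heckeTwo f) w u v z = eichlerIntegral f w u (2 * v) (2 * z) +
      eichlerIntegral f w (2 * u) v (z / 2) +
        eichlerIntegral f w (2 * u) (v - u) ((z + 1) / 2) := by
  set F : ℂ → ℂ → ℂ → ℂ := fun a b τ => f (ofComplex τ) * (a * τ + b) ^ w with hF
  have hint {c : ℝ} (hc : 0 < c) (d : ℝ) (a b : ℂ) :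
      IntegrableOn (fun t : ℝ => c * F a b (c * (z + Complex.I * t) + d)) (Set.Ioi 0) :=
    ((((verticallyDecaying_comp_ofComplex f).mul_affine_pow a b w).comp_affine hc
      d).integrableOn_ray hz).const_mul _
  have hhalf : (0 : ℝ) < 2⁻¹ := by norm_num
  have hsplit : ∀ τ : ℂ, 0 < τ.im → heckeTwo f (ofComplex τ) * (u * τ + v) ^ w =
      (2 : ℝ) * F u (2 * v) ((2 : ℝ) * τ + (0 : ℝ)) +
        (2⁻¹ : ℝ) * F (2 * u) v ((2⁻¹ : ℝ) * τ + (0 : ℝ)) +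
          (2⁻¹ : ℝ) * F (2 * u) (v - u) ((2⁻¹ : ℝ) * τ + (2⁻¹ : ℝ)) := by
    intro τ hτ
    have hpow : (2 : ℂ) ^ (k - 1) = 2 * 2 ^ w := by
      rw [hk, add_sub_assoc, ← zpow_natCast, zpow_add₀ two_ne_zero, mul_comm]
      norm_num
    rw [heckeTwo_apply, ofComplex_apply_of_im_pos hτ, heckeTwoFun_eq_comp_affine, hpow]
    simp only [hF]
    push_cast
    rw [show u * (2 * τ + 0) + 2 * v = 2 * (u * τ + v) by ring, mul_pow,
      show 2 * u * (2⁻¹ * τ + 0) + v = u * τ + v by ring,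
      show 2 * u * (2⁻¹ * τ + 2⁻¹) + (v - u) = u * τ + v by ring]
    ring
  rw [eichlerIntegral, rayIntegral_congr hz hsplit,
    rayIntegral_add ((hint two_pos 0 _ _).add (hint hhalf 0 _ _)) (hint hhalf 2⁻¹ _ _),
    rayIntegral_add (hint two_pos 0 _ _) (hint hhalf 0 _ _),
    rayIntegral_comp_affine _ two_pos, rayIntegral_comp_affine _ hhalf,
    rayIntegral_comp_affine _ hhalf]
  simp [eichlerIntegral, hF, div_eq_inv_mul, mul_add]

lemma eichlerIntegral_div_two_mul_add_one (hk : k = w + 2) (hw : Even w) (u v : ℂ)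
    {z : ℂ} (hz : 0 < z.im) :
    eichlerIntegral f w u v (z / (2 * z + 1)) =
      eichlerIntegral f w (u + 2 * v) v z - periodPoly f w (u + 2 * v) v -
        periodPoly f w v (-u) := by
  have him : 0 < (-1 / z - 1 - 1).im := by
    simpa only [sub_im, one_im, sub_zero] using neg_one_div_im_pos hz
  have hshift : eichlerIntegral f w v (-u) (-1 / z - 1 - 1) =
      eichlerIntegral f w v (-(u + 2 * v)) (-1 / z) := by
    have h₁ := eichlerIntegral_add_one f (w := w) v (-(u + 2 * v)) (-1 / z - 1)
    have h₂ := eichlerIntegral_add_one f (w := w) v (v + -(u + 2 * v)) (-1 / z - 1 - 1)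
    rw [sub_add_cancel] at h₁ h₂
    rw [h₁, h₂, show v + (v + -(u + 2 * v)) = -u by ring]
  rw [div_two_mul_add_one_eq hz, eichlerIntegral_neg_one_div f hk u v him, hshift,
    ← eichlerIntegral_neg f hw, neg_neg, eichlerIntegral_neg_one_div f hk _ _ hz, neg_neg]

lemma periodPoly_heckeTwo (hk : k = w + 2) (hw : Even w) (u v : ℂ) :
    periodPoly (heckeTwo f) w u v = periodPoly f w u (2 * v) + periodPoly f w (2 * u) v +
      periodPoly f w (2 * u) (v - u) + periodPoly f w (v - u) (-(2 * v)) := by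
  set z : ℂ := 2 * Complex.I + 1 with hz
  have hz₀ : 0 < z.im := by simp [hz]
  have hz₁ : -1 / z + 1 = 2 * (Complex.I / (2 * Complex.I + 1)) := by
    have hne : z ≠ 0 := by rintro h; simp [h] at hz₀
    rw [← hz]
    field_simp
    rw [hz]
    ring
  have h₁ := eichlerIntegral_neg_one_div f hk u (2 * v) (z := z / 2) (by simp [hz])
  have h₂ := eichlerIntegral_neg_one_div f hk (2 * u) v (z := 2 * z) (by simp [hz])
  have h₃ := eichlerIntegral_div_two_mul_add_one f hk hw (2 * u) (v - u) (z := Complex.I) (by simp)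
  have h₄ := eichlerIntegral_add_one f (w := w) (2 * v) (-u - v) Complex.I
  have h := eichlerIntegral_neg_one_div (heckeTwo f) hk u v hz₀
  rw [eichlerIntegral_heckeTwo f hk u v (neg_one_div_im_pos hz₀),
    eichlerIntegral_heckeTwo f hk v (-u) hz₀, hz₁, mul_div_cancel_left₀ _ two_ne_zero,
    show (z + 1) / 2 = Complex.I + 1 by rw [hz]; ring,
    show 2 * (-1 / z) = -1 / (z / 2) by field_simp,
    show -1 / z / 2 = -1 / (2 * z) by field_simp, mul_neg] at h
  rw [show 2 * u + 2 * (v - u) = 2 * v by ring] at h₃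
  rw [show 2 * v + (-u - v) = v - u by ring] at h₄
  have h₅ := periodPoly_antisymm f hk hw (v - u) (-(2 * v))
  rw [periodPoly_neg f hw] at h₅
  linear_combination periodPoly_antisymm (heckeTwo f) hk hw u v -
    periodPoly_antisymm f hk hw u (2 * v) - periodPoly_antisymm f hk hw (2 * u) v -
    periodPoly_antisymm f hk hw (2 * u) (v - u) - h₅ + h₁ + h₂ + h₃ - h₄ - h

lemma evenPeriodPoly_heckeTwo (hk : k = w + 2) (hw : Even w) (u v : ℂ) :
    evenPeriodPoly (heckeTwo f) w u v =
      evenPeriodPoly f w u (2 * v) + evenPeriodPoly f w (2 * u) v +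
        evenPeriodPoly f w (2 * u) (u - v) + evenPeriodPoly f w (u - v) (2 * v) := by
  have h₁ := periodPoly_heckeTwo f hk hw u v
  have h₂ := periodPoly_heckeTwo f hk hw u (-v)
  have h₃ : periodPoly f w (2 * u) (-v - u) =
      periodPoly f w (u - v) (-v - u) + periodPoly f w (2 * u) (u - v) := by
    convert periodPoly_lewis f hk hw (2 * u) (-v - u) using 3 <;> ring
  have h₄ : periodPoly f w (-v - u) (2 * v) =
      periodPoly f w (u - v) (-(2 * v)) + periodPoly f w (u + v) (u - v) := by
    rw [← periodPoly_neg f hw (-v - u)]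
    convert periodPoly_lewis f hk hw (u + v) (-(2 * v)) using 3 <;> ring
  have h₅ : periodPoly f w (u + v) (u - v) = -periodPoly f w (u - v) (-v - u) := by
    convert periodPoly_antisymm f hk hw (u + v) (u - v) using 3
    ring
  have h₆ := periodPoly_neg f hw (u - v) (2 * v)
  rw [neg_sub] at h₆
  simp only [evenPeriodPoly, neg_sub]
  rw [mul_neg, neg_neg] at h₂
  linear_combination h₁ + h₂ + h₃ + h₄ + h₅ + h₆

end HeckePeriods

lemma evenPeriodPoly_smul (c : ℂ) (f : ℍ → ℂ) (w : ℕ) (u v : ℂ) :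
    evenPeriodPoly (c • f) w u v = c * evenPeriodPoly f w u v := by
  simp only [evenPeriodPoly, periodPoly, eichlerIntegral, rayIntegral, Pi.smul_apply, smul_eq_mul,
    mul_assoc, integral_const_mul, mul_add]

section Positivity
open scoped ComplexOrder

lemma mellin_pos {g : ℝ → ℂ} {s : ℝ} (hg : MellinConvergent g s) (hpos : ∀ t, 0 < t → 0 < g t) :
    0 < mellin g s := by
  have hreal : Set.EqOn (fun t : ℝ => (t : ℂ) ^ ((s : ℂ) - 1) • g t)
      (fun t => ((t ^ (s - 1) * ‖g t‖ : ℝ) : ℂ)) (Set.Ioi 0) := fun t (ht : 0 < t) => by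
    push_cast [ofReal_cpow ht.le]
    rw [smul_eq_mul, ← eq_coe_norm_of_nonneg (hpos t ht).le]
  have hint : IntegrableOn (fun t : ℝ => t ^ (s - 1) * ‖g t‖) (Set.Ioi 0) :=
    (hg.congr_fun hreal measurableSet_Ioi).re
  have hpos' : ∀ t ∈ Set.Ioi (0 : ℝ), 0 < t ^ (s - 1) * ‖g t‖ := fun t ht =>
    mul_pos (Real.rpow_pos_of_pos ht _) (norm_pos_iff.mpr (hpos t ht).ne')
  rw [mellin, setIntegral_congr_fun measurableSet_Ioi hreal, integral_complex_ofReal,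
    zero_lt_real, setIntegral_pos_iff_support_of_nonneg_ae
      ((ae_restrict_mem measurableSet_Ioi).mono fun t ht => (hpos' t ht).le) hint,
    Set.inter_eq_right.mpr fun t ht => Function.mem_support.mpr (hpos' t ht).ne']
  simp

lemma Lstar_pos {k : ℤ} (f : CuspForm 𝒮ℒ k) (hk : 0 < k)
    (hf : ∀ t : ℝ, 0 < t → 0 < f (ofComplex (Complex.I * t))) (s : ℝ) : 0 < Lstar f s := by
  rw [Lstar_eq_mellin]
  exact mellin_pos (mellinConvergent_levelOne f hk s) hf

lemma DeltaH_eq_discriminant : DeltaH = CuspForm.discriminant := by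
  ext τ
  rw [CuspForm.coe_discriminant, ModularForm.discriminant_eq_q_prod, DeltaH]
  simp [ModularForm.eta_q_eq_cexp, Function.Periodic.qParam]

lemma discriminant_imaginaryAxis_pos {t : ℝ} (ht : 0 < t) :
    0 < CuspForm.discriminant (ofComplex (Complex.I * t)) := by
  have him : 0 < (Complex.I * t).im := by simpa using ht
  have hexp (c : ℝ) : cexp (2 * Real.pi * Complex.I * c * (Complex.I * t)) =
      (Real.exp (-(2 * Real.pi * c * t)) : ℝ) := by
    push_cast
    congr 1
    linear_combination (2 * Real.pi * c * t) * Complex.I_mul_I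
  refine lt_of_le_of_ne' ?_ (ModularForm.discriminant_ne_zero _)
  rw [← DeltaH_eq_discriminant, DeltaH, ofComplex_apply_of_im_pos him]
  refine mul_nonneg ?_ (tprod_nonneg fun n => ?_)
  · have h := hexp 1
    rw [ofReal_one, mul_one] at h
    rw [h]
    exact zero_le_real.mpr (Real.exp_pos _).le
  · have h := hexp (n + 1)
    push_cast only [ofReal_add, ofReal_natCast, ofReal_one] at h
    rw [h, ← ofReal_one, ← ofReal_sub, ← ofReal_pow]
    exact zero_le_real.mpr (Even.pow_nonneg (by decide) _)

lemma Lstar_discriminant_ne_zero (s : ℝ) : Lstar CuspForm.discriminant s ≠ 0 :=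
  (Lstar_pos _ (by norm_num) (fun _ => discriminant_imaginaryAxis_pos) s).ne'

end Positivity

section WeightTwelve
variable (f : CuspForm 𝒮ℒ 12)

lemma Lstar_eq_of_add_eq_twelve {s t : ℝ} (hst : s + t = 12) : Lstar f s = Lstar f t := by
  have h := Lstar_weight_sub f (by norm_num) t
  have hI : Complex.I ^ (12 : ℤ) = 1 := by
    rw [show (12 : ℤ) = (4 * 3 : ℕ) by norm_num, zpow_natCast, pow_mul, I_pow_four, one_pow]
  rwa [hI, one_mul, Int.cast_ofNat, ← hst, add_sub_cancel_right] at h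

lemma evenPeriodPoly_weight_twelve (u v : ℂ) :
    evenPeriodPoly f 10 u v = 2 * Complex.I * (Lstar f 11 * (v ^ 10 - u ^ 10) +
      45 * Lstar f 9 * (u ^ 8 * v ^ 2 - u ^ 2 * v ^ 8) +
        210 * Lstar f 7 * (u ^ 4 * v ^ 6 - u ^ 6 * v ^ 4)) := by
  have h₁ : Lstar f 1 = Lstar f 11 := Lstar_eq_of_add_eq_twelve f (by norm_num)
  have h₃ : Lstar f 3 = Lstar f 9 := Lstar_eq_of_add_eq_twelve f (by norm_num)
  have h₅ : Lstar f 5 = Lstar f 7 := Lstar_eq_of_add_eq_twelve f (by norm_num)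
  simp only [evenPeriodPoly, periodPoly_eq_sum f (w := 10) rfl, Finset.sum_range_succ,
    Finset.sum_range_zero, Nat.choose, pow_succ]
  norm_num
  rw [h₁, h₃, h₅]
  ring

lemma fourteen_mul_Lstar_seven : 14 * Lstar f 7 = 9 * Lstar f 9 := by
  have h := evenPeriodPoly_lewis f (w := 10) rfl (by decide) 1 2
  simp only [evenPeriodPoly_weight_twelve] at h
  refine mul_left_cancel₀ (a := 2 * Complex.I * 88200) (by simp) ?_
  linear_combination h

variable {f} {c : ℂ}

lemma evenPeriodPoly_of_heckeTwo_eq_smul (hc : heckeTwo f = c • f) (u v : ℂ) :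
    c * evenPeriodPoly f 10 u v =
      evenPeriodPoly f 10 u (2 * v) + evenPeriodPoly f 10 (2 * u) v +
        evenPeriodPoly f 10 (2 * u) (u - v) + evenPeriodPoly f 10 (u - v) (2 * v) := by
  rw [← evenPeriodPoly_smul, ← evenPeriodPoly_heckeTwo f rfl (by decide), hc, FunLike.coe_smul]

lemma Lstar_eleven_of_heckeTwo_eq_smul (hc : heckeTwo f = c • f) :
    (2049 - c) * Lstar f 11 = 4860 * Lstar f 9 := by
  have h := evenPeriodPoly_of_heckeTwo_eq_smul hc 1 0
  simp only [evenPeriodPoly_weight_twelve] at h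
  refine mul_left_cancel₀ (a := 2 * Complex.I) (by simp) ?_
  linear_combination h - 1440 * Complex.I * fourteen_mul_Lstar_seven f

lemma eigenvalue_of_heckeTwo_eq_smul (hc : heckeTwo f = c • f) (h₉ : Lstar f 9 ≠ 0) : c = -24 := by
  have h := evenPeriodPoly_of_heckeTwo_eq_smul hc 2 1
  simp only [evenPeriodPoly_weight_twelve] at h
  have hzero : (c + 24) * Lstar f 9 = 0 := by
    refine (mul_eq_zero_iff_left (a := 2 * Complex.I * 4860) (by simp)).mp ?_
    linear_combination h - 2046 * Complex.I * Lstar_eleven_of_heckeTwo_eq_smul hc +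
      2 * Complex.I * (720 * (c + 1) - 115200) * fourteen_mul_Lstar_seven f
  exact eq_neg_of_add_eq_zero_left ((mul_eq_zero_iff_right h₉).mp hzero)

end WeightTwelve

/-- the completed `L`-values of `Δ` satisfy `L*_Δ(1) = L*_Δ(11)`,
`L*_Δ(3) = L*_Δ(9) = (691/1620) L*_Δ(11)`, `L*_Δ(5) = L*_Δ(7) = (691/2520) L*_Δ(11)`,
and `L*_Δ(11) ≠ 0`. -/
theorem delta_Lvalue_ratios :
    Lstar DeltaH 1 = Lstar DeltaH 11 ∧
    Lstar DeltaH 3 = (691 / 1620 : ℂ) * Lstar DeltaH 11 ∧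
    Lstar DeltaH 5 = (691 / 2520 : ℂ) * Lstar DeltaH 11 ∧
    Lstar DeltaH 7 = (691 / 2520 : ℂ) * Lstar DeltaH 11 ∧
    Lstar DeltaH 9 = (691 / 1620 : ℂ) * Lstar DeltaH 11 ∧
    Lstar DeltaH 11 ≠ 0 := by
  rw [DeltaH_eq_discriminant]
  set D := CuspForm.discriminant
  obtain ⟨c, hc⟩ := CuspForm.exists_smul_discriminant_of_weight_eq_twelve (heckeTwo D)
  have h₁ : Lstar D 1 = Lstar D 11 := Lstar_eq_of_add_eq_twelve D (by norm_num)
  have h₃ : Lstar D 3 = Lstar D 9 := Lstar_eq_of_add_eq_twelve D (by norm_num)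
  have h₅ : Lstar D 5 = Lstar D 7 := Lstar_eq_of_add_eq_twelve D (by norm_num)
  have h₇ := fourteen_mul_Lstar_seven D
  have h₉ := Lstar_eleven_of_heckeTwo_eq_smul hc.symm
  rw [eigenvalue_of_heckeTwo_eq_smul hc.symm (Lstar_discriminant_ne_zero 9)] at h₉
  have h₉' : Lstar D 9 = 691 / 1620 * Lstar D 11 := by linear_combination -h₉ / 4860
  have h₇' : Lstar D 7 = 691 / 2520 * Lstar D 11 := by linear_combination h₇ / 14 + 9 / 14 * h₉'
  exact ⟨h₁, h₃.trans h₉', h₅.trans h₇', h₇', h₉', Lstar_discriminant_ne_zero 11⟩
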